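/- Gentzen's Hauptsatz for LKp: the cut rule is admissible in LKp, that is, every sequent provable in LKp has a proof in LKp that contains no instance of the cut rule. -/

import Mathlib

/-!
The proof is semantic.  Every rule of LKp, cut included, preserves classical validity
(`Deriv.valid`), so a provable sequent is valid; and every valid sequent has a cut-free proof
(`cutFreeProvable_of_valid`).  The latter is an induction on the total number of connectives:
each logical rule can be read backwards as an *invertible* reduction to valid sequents with fewer
connectives, and a valid sequent of atoms has an atom common to both sides, so it follows from an
axiom by structural rules.  The structural rules are summed up in `CutFreeProvable.mono`:
cut-free provability is monotone for inclusion of the *sets* of formulas on either side.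
-/

/-!
The system LKp: the propositional fragment of Gentzen's sequent calculus LK.
Sequents are pairs of finite lists of formulas.  In the rules below, a list
written `Γ, P` in the paper is encoded as `Γ ++ [P]` on the left of the
turnstile and as `P :: Δ` on the right (matching the usual presentation
`Γ ⊢ P, Δ`).
-/

namespace LKp

/-- Classical propositional formulas over countably many atoms. -/
inductive Formula : Type where
  | atom : ℕ → Formula
  | neg  : Formula → Formula
  | and  : Formula → Formula → Formula
  | or   : Formula → Formula → Formula
  | imp  : Formula → Formula → Formula
deriving DecidableEq

/-- A sequent `Γ ⊢ Δ` is a pair of finite lists of formulas. -/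
abbrev Sequent := List Formula × List Formula

/-- The degree of a formula: `δ(a) = 1`, `δ(¬P) = 1 + δ(P)`,
`δ(P∧Q) = δ(P∨Q) = δ(P→Q) = 1 + max(δ(P), δ(Q))`. -/
def Formula.degree : Formula → ℕ
  | .atom _ => 1
  | .neg P => P.degree + 1
  | .and P Q => max P.degree Q.degree + 1
  | .or P Q => max P.degree Q.degree + 1
  | .imp P Q => max P.degree Q.degree + 1

/-- Derivations in LKp: trees of rule instances, with `hyp` marking an open
leaf (a premise of the derivation). -/
inductive Deriv : Sequent → Type where
  | hyp (S : Sequent) : Deriv S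
  | ax (P : Formula) : Deriv ([P], [P])
  | permL (Γ Γ' Δ : List Formula) (P Q : Formula) :
      Deriv (Γ ++ P :: Q :: Γ', Δ) → Deriv (Γ ++ Q :: P :: Γ', Δ)
  | permR (Γ Δ Δ' : List Formula) (P Q : Formula) :
      Deriv (Γ, Δ ++ P :: Q :: Δ') → Deriv (Γ, Δ ++ Q :: P :: Δ')
  | contL (Γ Δ : List Formula) (P : Formula) :
      Deriv (Γ ++ [P, P], Δ) → Deriv (Γ ++ [P], Δ)
  | contR (Γ Δ : List Formula) (Q : Formula) :
      Deriv (Γ, Q :: Q :: Δ) → Deriv (Γ, Q :: Δ)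
  | weakL (Γ Δ : List Formula) (P : Formula) :
      Deriv (Γ, Δ) → Deriv (Γ ++ [P], Δ)
  | weakR (Γ Δ : List Formula) (Q : Formula) :
      Deriv (Γ, Δ) → Deriv (Γ, Q :: Δ)
  | cut (Γ Δ Γ' Δ' : List Formula) (P : Formula) :
      Deriv (Γ, P :: Δ) → Deriv (Γ' ++ [P], Δ') → Deriv (Γ ++ Γ', Δ ++ Δ')
  | andL1 (Γ Δ : List Formula) (P Q : Formula) :
      Deriv (Γ ++ [P], Δ) → Deriv (Γ ++ [P.and Q], Δ)
  | andL2 (Γ Δ : List Formula) (P Q : Formula) :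
      Deriv (Γ ++ [Q], Δ) → Deriv (Γ ++ [P.and Q], Δ)
  | andR (Γ Δ : List Formula) (P Q : Formula) :
      Deriv (Γ, P :: Δ) → Deriv (Γ, Q :: Δ) → Deriv (Γ, (P.and Q) :: Δ)
  | orR1 (Γ Δ : List Formula) (P Q : Formula) :
      Deriv (Γ, P :: Δ) → Deriv (Γ, (P.or Q) :: Δ)
  | orR2 (Γ Δ : List Formula) (P Q : Formula) :
      Deriv (Γ, Q :: Δ) → Deriv (Γ, (P.or Q) :: Δ)
  | orL (Γ Δ : List Formula) (P Q : Formula) :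
      Deriv (Γ ++ [P], Δ) → Deriv (Γ ++ [Q], Δ) → Deriv (Γ ++ [P.or Q], Δ)
  | impR (Γ Δ : List Formula) (P Q : Formula) :
      Deriv (Γ ++ [P], Q :: Δ) → Deriv (Γ, (P.imp Q) :: Δ)
  | impL (Γ Δ : List Formula) (P Q : Formula) :
      Deriv (Γ, P :: Δ) → Deriv (Γ ++ [Q], Δ) → Deriv (Γ ++ [P.imp Q], Δ)
  | negL (Γ Δ : List Formula) (P : Formula) :
      Deriv (Γ, P :: Δ) → Deriv (Γ ++ [P.neg], Δ)
  | negR (Γ Δ : List Formula) (P : Formula) :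
      Deriv (Γ ++ [P], Δ) → Deriv (Γ, P.neg :: Δ)

/-- The degree of a derivation: the maximum of the degrees of the cut
formulas occurring in it (`0` if there is no cut). -/
def Deriv.degree : ∀ {S : Sequent}, Deriv S → ℕ
  | _, .hyp _ => 0
  | _, .ax _ => 0
  | _, .permL _ _ _ _ _ d => Deriv.degree d
  | _, .permR _ _ _ _ _ d => Deriv.degree d
  | _, .contL _ _ _ d => Deriv.degree d
  | _, .contR _ _ _ d => Deriv.degree d
  | _, .weakL _ _ _ d => Deriv.degree d
  | _, .weakR _ _ _ d => Deriv.degree d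
  | _, .cut _ _ _ _ P d₁ d₂ => max P.degree (max (Deriv.degree d₁) (Deriv.degree d₂))
  | _, .andL1 _ _ _ _ d => Deriv.degree d
  | _, .andL2 _ _ _ _ d => Deriv.degree d
  | _, .andR _ _ _ _ d₁ d₂ => max (Deriv.degree d₁) (Deriv.degree d₂)
  | _, .orR1 _ _ _ _ d => Deriv.degree d
  | _, .orR2 _ _ _ _ d => Deriv.degree d
  | _, .orL _ _ _ _ d₁ d₂ => max (Deriv.degree d₁) (Deriv.degree d₂)
  | _, .impR _ _ _ _ d => Deriv.degree d
  | _, .impL _ _ _ _ d₁ d₂ => max (Deriv.degree d₁) (Deriv.degree d₂)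
  | _, .negL _ _ _ d => Deriv.degree d
  | _, .negR _ _ _ d => Deriv.degree d

/-- A derivation is a proof when all of its leaves are axiom instances,
i.e. it has no open hypothesis. -/
def Deriv.isProof : ∀ {S : Sequent}, Deriv S → Prop
  | _, .hyp _ => False
  | _, .ax _ => True
  | _, .permL _ _ _ _ _ d => Deriv.isProof d
  | _, .permR _ _ _ _ _ d => Deriv.isProof d
  | _, .contL _ _ _ d => Deriv.isProof d
  | _, .contR _ _ _ d => Deriv.isProof d
  | _, .weakL _ _ _ d => Deriv.isProof d
  | _, .weakR _ _ _ d => Deriv.isProof d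
  | _, .cut _ _ _ _ _ d₁ d₂ => Deriv.isProof d₁ ∧ Deriv.isProof d₂
  | _, .andL1 _ _ _ _ d => Deriv.isProof d
  | _, .andL2 _ _ _ _ d => Deriv.isProof d
  | _, .andR _ _ _ _ d₁ d₂ => Deriv.isProof d₁ ∧ Deriv.isProof d₂
  | _, .orR1 _ _ _ _ d => Deriv.isProof d
  | _, .orR2 _ _ _ _ d => Deriv.isProof d
  | _, .orL _ _ _ _ d₁ d₂ => Deriv.isProof d₁ ∧ Deriv.isProof d₂
  | _, .impR _ _ _ _ d => Deriv.isProof d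
  | _, .impL _ _ _ _ d₁ d₂ => Deriv.isProof d₁ ∧ Deriv.isProof d₂
  | _, .negL _ _ _ d => Deriv.isProof d
  | _, .negR _ _ _ d => Deriv.isProof d

/-- The list of open premises (hypothesis leaves) of a derivation. -/
def Deriv.prems : ∀ {S : Sequent}, Deriv S → List Sequent
  | _, .hyp S => [S]
  | _, .ax _ => []
  | _, .permL _ _ _ _ _ d => Deriv.prems d
  | _, .permR _ _ _ _ _ d => Deriv.prems d
  | _, .contL _ _ _ d => Deriv.prems d
  | _, .contR _ _ _ d => Deriv.prems d
  | _, .weakL _ _ _ d => Deriv.prems d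
  | _, .weakR _ _ _ d => Deriv.prems d
  | _, .cut _ _ _ _ _ d₁ d₂ => Deriv.prems d₁ ++ Deriv.prems d₂
  | _, .andL1 _ _ _ _ d => Deriv.prems d
  | _, .andL2 _ _ _ _ d => Deriv.prems d
  | _, .andR _ _ _ _ d₁ d₂ => Deriv.prems d₁ ++ Deriv.prems d₂
  | _, .orR1 _ _ _ _ d => Deriv.prems d
  | _, .orR2 _ _ _ _ d => Deriv.prems d
  | _, .orL _ _ _ _ d₁ d₂ => Deriv.prems d₁ ++ Deriv.prems d₂
  | _, .impR _ _ _ _ d => Deriv.prems d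
  | _, .impL _ _ _ _ d₁ d₂ => Deriv.prems d₁ ++ Deriv.prems d₂
  | _, .negL _ _ _ d => Deriv.prems d
  | _, .negR _ _ _ d => Deriv.prems d

/-- A derivation is cut-free when it contains no instance of the cut rule. -/
def Deriv.cutFree : ∀ {S : Sequent}, Deriv S → Prop
  | _, .hyp _ => True
  | _, .ax _ => True
  | _, .permL _ _ _ _ _ d => Deriv.cutFree d
  | _, .permR _ _ _ _ _ d => Deriv.cutFree d
  | _, .contL _ _ _ d => Deriv.cutFree d
  | _, .contR _ _ _ d => Deriv.cutFree d
  | _, .weakL _ _ _ d => Deriv.cutFree d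
  | _, .weakR _ _ _ d => Deriv.cutFree d
  | _, .cut _ _ _ _ _ _ _ => False
  | _, .andL1 _ _ _ _ d => Deriv.cutFree d
  | _, .andL2 _ _ _ _ d => Deriv.cutFree d
  | _, .andR _ _ _ _ d₁ d₂ => Deriv.cutFree d₁ ∧ Deriv.cutFree d₂
  | _, .orR1 _ _ _ _ d => Deriv.cutFree d
  | _, .orR2 _ _ _ _ d => Deriv.cutFree d
  | _, .orL _ _ _ _ d₁ d₂ => Deriv.cutFree d₁ ∧ Deriv.cutFree d₂
  | _, .impR _ _ _ _ d => Deriv.cutFree d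
  | _, .impL _ _ _ _ d₁ d₂ => Deriv.cutFree d₁ ∧ Deriv.cutFree d₂
  | _, .negL _ _ _ d => Deriv.cutFree d
  | _, .negR _ _ _ d => Deriv.cutFree d

end LKp

namespace LKp

/-! ### Cut-free provability and the structural rules -/

/-- The sequent `Γ ⊢ Δ` has a cut-free proof. -/
def CutFreeProvable (Γ Δ : List Formula) : Prop :=
  ∃ Ψ : Deriv (Γ, Δ), Ψ.isProof ∧ Ψ.cutFree

namespace CutFreeProvable

variable {Γ Γ' Δ Δ' : List Formula} {P Q : Formula}

/-- The initial segment `Θ` is carried along so that the induction on the permutation can pass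
under a `cons`. -/
theorem permL_aux (h : Γ.Perm Γ') :
    ∀ Θ : List Formula, CutFreeProvable (Θ ++ Γ) Δ → CutFreeProvable (Θ ++ Γ') Δ := by
  induction h with
  | nil => exact fun _ h => h
  | cons a _ ih =>
    intro Θ h
    have := ih (Θ ++ [a]) (by simpa using h)
    simpa using this
  | swap a b l =>
    rintro Θ ⟨d, hp, hc⟩
    exact ⟨.permL _ _ _ _ _ d, hp, hc⟩
  | trans _ _ ih₁ ih₂ => exact fun Θ h => ih₂ Θ (ih₁ Θ h)

theorem permR_aux (h : Δ.Perm Δ') :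
    ∀ Θ : List Formula, CutFreeProvable Γ (Θ ++ Δ) → CutFreeProvable Γ (Θ ++ Δ') := by
  induction h with
  | nil => exact fun _ h => h
  | cons a _ ih =>
    intro Θ h
    have := ih (Θ ++ [a]) (by simpa using h)
    simpa using this
  | swap a b l =>
    rintro Θ ⟨d, hp, hc⟩
    exact ⟨.permR _ _ _ _ _ d, hp, hc⟩
  | trans _ _ ih₁ ih₂ => exact fun Θ h => ih₂ Θ (ih₁ Θ h)

theorem permL (h : Γ.Perm Γ') (d : CutFreeProvable Γ Δ) : CutFreeProvable Γ' Δ :=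
  permL_aux h [] d

theorem permR (h : Δ.Perm Δ') (d : CutFreeProvable Γ Δ) : CutFreeProvable Γ Δ' :=
  permR_aux h [] d

theorem contractL (Θ : List Formula) :
    Θ ⊆ Γ → CutFreeProvable (Θ ++ Γ) Δ → CutFreeProvable Γ Δ := by
  induction Θ with
  | nil => exact fun _ h => h
  | cons a Θ ih =>
    intro hs h
    obtain ⟨ha, hs⟩ := List.cons_subset.1 hs
    have hperm := List.perm_cons_erase ha
    have h₁ : (a :: Θ ++ Γ).Perm (Θ ++ Γ.erase a ++ [a, a]) := by
      rw [List.perm_iff_count] at hperm ⊢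
      intro b
      have := hperm b
      simp only [List.count_append, List.count_cons, List.count_nil] at this ⊢
      omega
    have h₂ : (Θ ++ Γ.erase a ++ [a]).Perm (Θ ++ Γ) := by
      rw [List.perm_iff_count] at hperm ⊢
      intro b
      have := hperm b
      simp only [List.count_append, List.count_cons, List.count_nil] at this ⊢
      omega
    obtain ⟨d, hp, hc⟩ := permL h₁ h
    exact ih hs (permL h₂ ⟨.contL _ _ _ d, hp, hc⟩)

theorem contractR (Θ : List Formula) :
    Θ ⊆ Δ → CutFreeProvable Γ (Θ ++ Δ) → CutFreeProvable Γ Δ := by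
  induction Θ with
  | nil => exact fun _ h => h
  | cons a Θ ih =>
    intro hs h
    obtain ⟨ha, hs⟩ := List.cons_subset.1 hs
    have hperm := List.perm_cons_erase ha
    have h₁ : (a :: Θ ++ Δ).Perm (a :: a :: (Θ ++ Δ.erase a)) := by
      rw [List.perm_iff_count] at hperm ⊢
      intro b
      have := hperm b
      simp only [List.count_append, List.count_cons] at this ⊢
      omega
    have h₂ : (a :: (Θ ++ Δ.erase a)).Perm (Θ ++ Δ) := by
      rw [List.perm_iff_count] at hperm ⊢
      intro b
      have := hperm b
      simp only [List.count_append, List.count_cons] at this ⊢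
      omega
    obtain ⟨d, hp, hc⟩ := permR h₁ h
    exact ih hs (permR h₂ ⟨.contR _ _ _ d, hp, hc⟩)

theorem weakenL (Θ : List Formula) (h : CutFreeProvable Γ Δ) :
    CutFreeProvable (Γ ++ Θ) Δ := by
  induction Θ generalizing Γ with
  | nil => simpa using h
  | cons a Θ ih =>
    obtain ⟨d, hp, hc⟩ := h
    have := ih (Γ := Γ ++ [a]) ⟨.weakL _ _ _ d, hp, hc⟩
    simpa using this

theorem weakenR (Θ : List Formula) (h : CutFreeProvable Γ Δ) :
    CutFreeProvable Γ (Θ ++ Δ) := by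
  induction Θ with
  | nil => exact h
  | cons a Θ ih =>
    obtain ⟨d, hp, hc⟩ := ih
    exact ⟨.weakR _ _ _ d, hp, hc⟩

/-- All structural rules at once: only the sets of formulas on either side matter, and they may
be enlarged. -/
theorem mono (h : CutFreeProvable Γ Δ) (hΓ : Γ ⊆ Γ') (hΔ : Δ ⊆ Δ') :
    CutFreeProvable Γ' Δ' :=
  contractR Δ hΔ <| permR List.perm_append_comm <| weakenR Δ' <|
    contractL Γ hΓ <| weakenL Γ' h

/-! ### Logical rules for the invertible reductions -/

theorem ax (P : Formula) : CutFreeProvable [P] [P] := ⟨.ax P, trivial, trivial⟩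

theorem negL (h : CutFreeProvable Γ (P :: Δ)) : CutFreeProvable (Γ ++ [P.neg]) Δ :=
  let ⟨d, hp, hc⟩ := h
  ⟨.negL _ _ _ d, hp, hc⟩

theorem negR (h : CutFreeProvable (Γ ++ [P]) Δ) : CutFreeProvable Γ (P.neg :: Δ) :=
  let ⟨d, hp, hc⟩ := h
  ⟨.negR _ _ _ d, hp, hc⟩

/-- The multiplicative form of left `∧`, obtained from both additive rules and a contraction. -/
theorem andL (h : CutFreeProvable (Γ ++ [P, Q]) Δ) : CutFreeProvable (Γ ++ [P.and Q]) Δ := by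
  obtain ⟨d, hp, hc⟩ : CutFreeProvable (Γ ++ [P] ++ [Q]) Δ := by simpa using h
  have h₁ : CutFreeProvable (Γ ++ [P] ++ [P.and Q]) Δ := ⟨.andL2 _ _ _ _ d, hp, hc⟩
  obtain ⟨d', hp', hc'⟩ : CutFreeProvable (Γ ++ [P.and Q] ++ [P]) Δ :=
    h₁.mono (by intro x; simp; tauto) (List.Subset.refl _)
  have h₂ : CutFreeProvable (Γ ++ [P.and Q] ++ [P.and Q]) Δ := ⟨.andL1 _ _ _ _ d', hp', hc'⟩
  exact h₂.mono (by intro x; simp) (List.Subset.refl _)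

theorem andR (h₁ : CutFreeProvable Γ (P :: Δ)) (h₂ : CutFreeProvable Γ (Q :: Δ)) :
    CutFreeProvable Γ (P.and Q :: Δ) :=
  let ⟨d₁, hp₁, hc₁⟩ := h₁
  let ⟨d₂, hp₂, hc₂⟩ := h₂
  ⟨.andR _ _ _ _ d₁ d₂, ⟨hp₁, hp₂⟩, ⟨hc₁, hc₂⟩⟩

theorem orL (h₁ : CutFreeProvable (Γ ++ [P]) Δ) (h₂ : CutFreeProvable (Γ ++ [Q]) Δ) :
    CutFreeProvable (Γ ++ [P.or Q]) Δ :=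
  let ⟨d₁, hp₁, hc₁⟩ := h₁
  let ⟨d₂, hp₂, hc₂⟩ := h₂
  ⟨.orL _ _ _ _ d₁ d₂, ⟨hp₁, hp₂⟩, ⟨hc₁, hc₂⟩⟩

/-- The multiplicative form of right `∨`, obtained from both additive rules and a contraction. -/
theorem orR (h : CutFreeProvable Γ (P :: Q :: Δ)) : CutFreeProvable Γ (P.or Q :: Δ) := by
  obtain ⟨d, hp, hc⟩ := h
  have h₁ : CutFreeProvable Γ (P.or Q :: Q :: Δ) := ⟨.orR1 _ _ _ _ d, hp, hc⟩
  obtain ⟨d', hp', hc'⟩ : CutFreeProvable Γ (Q :: P.or Q :: Δ) :=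
    h₁.mono (List.Subset.refl _) (by intro x; simp; tauto)
  have h₂ : CutFreeProvable Γ (P.or Q :: P.or Q :: Δ) := ⟨.orR2 _ _ _ _ d', hp', hc'⟩
  exact h₂.mono (List.Subset.refl _) (by intro x; simp)

theorem impL (h₁ : CutFreeProvable Γ (P :: Δ)) (h₂ : CutFreeProvable (Γ ++ [Q]) Δ) :
    CutFreeProvable (Γ ++ [P.imp Q]) Δ :=
  let ⟨d₁, hp₁, hc₁⟩ := h₁
  let ⟨d₂, hp₂, hc₂⟩ := h₂
  ⟨.impL _ _ _ _ d₁ d₂, ⟨hp₁, hp₂⟩, ⟨hc₁, hc₂⟩⟩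

theorem impR (h : CutFreeProvable (Γ ++ [P]) (Q :: Δ)) : CutFreeProvable Γ (P.imp Q :: Δ) :=
  let ⟨d, hp, hc⟩ := h
  ⟨.impR _ _ _ _ d, hp, hc⟩

end CutFreeProvable

/-! ### Semantics and soundness -/

/-- Truth of a formula under the valuation `v` of the atoms. -/
def Formula.eval (v : ℕ → Prop) : Formula → Prop
  | .atom n => v n
  | .neg P => ¬ P.eval v
  | .and P Q => P.eval v ∧ Q.eval v
  | .or P Q => P.eval v ∨ Q.eval v
  | .imp P Q => P.eval v → Q.eval v

/-- `Γ ⊢ Δ` is valid: every valuation making all of `Γ` true makes some formula of `Δ` true. -/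
def Valid (Γ Δ : List Formula) : Prop :=
  ∀ v : ℕ → Prop, (∀ P ∈ Γ, P.eval v) → ∃ Q ∈ Δ, Q.eval v

theorem Deriv.valid_at (v : ℕ → Prop) {S : Sequent} (d : Deriv S) :
    d.isProof → (∀ P ∈ S.1, P.eval v) → ∃ Q ∈ S.2, Q.eval v := by
  induction d <;> intro hd <;>
    simp only [Deriv.isProof, List.mem_append, List.mem_cons, List.not_mem_nil, or_false,
      or_imp, forall_and, forall_eq, exists_eq_left, or_and_right, exists_or, Formula.eval] at * <;>
    grind

theorem Deriv.valid {S : Sequent} (d : Deriv S) (hd : d.isProof) : Valid S.1 S.2 :=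
  fun v => d.valid_at v hd

/-! ### Cut-free completeness -/

/-- The number of connectives of a formula. -/
def Formula.size : Formula → ℕ
  | .atom _ => 0
  | .neg P => P.size + 1
  | .and P Q => P.size + Q.size + 1
  | .or P Q => P.size + Q.size + 1
  | .imp P Q => P.size + Q.size + 1

/-- The total number of connectives in a list of formulas. -/
def listSize (Γ : List Formula) : ℕ := (Γ.map Formula.size).sum

/-- One reduction step for a formula on the left, by the invertible rule for its connective. -/
theorem reduceL {Γ Δ : List Formula} {F : Formula} (hF : ∀ a, F ≠ .atom a)
    (ih : ∀ Γ' Δ', listSize Γ' + listSize Δ' < listSize Γ + F.size + listSize Δ →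
      Valid Γ' Δ' → CutFreeProvable Γ' Δ')
    (hv : Valid (Γ ++ [F]) Δ) : CutFreeProvable (Γ ++ [F]) Δ := by
  cases F with
  | atom a => exact absurd rfl (hF a)
  | neg P =>
    refine .negL (ih _ _ (by simp [listSize, Formula.size]; omega) fun v => ?_)
    have := hv v
    simp [Formula.eval, or_imp, forall_and] at *
    grind
  | and P Q =>
    refine .andL (ih _ _ (by simp [listSize, Formula.size]) fun v => ?_)
    have := hv v
    simp [Formula.eval, or_imp, forall_and] at *
    grind
  | or P Q =>
    refine .orL (ih _ _ (by simp [listSize, Formula.size]) fun v => ?_)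
      (ih _ _ (by simp [listSize, Formula.size]) fun v => ?_) <;>
    · have := hv v
      simp [Formula.eval, or_imp, forall_and] at *
      grind
  | imp P Q =>
    refine .impL (ih _ _ (by simp [listSize, Formula.size]; omega) fun v => ?_)
      (ih _ _ (by simp [listSize, Formula.size]) fun v => ?_) <;>
    · have := hv v
      simp [Formula.eval, or_imp, forall_and] at *
      grind

/-- One reduction step for a formula on the right, by the invertible rule for its connective. -/
theorem reduceR {Γ Δ : List Formula} {F : Formula} (hF : ∀ a, F ≠ .atom a)
    (ih : ∀ Γ' Δ', listSize Γ' + listSize Δ' < listSize Γ + F.size + listSize Δ →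
      Valid Γ' Δ' → CutFreeProvable Γ' Δ')
    (hv : Valid Γ (F :: Δ)) : CutFreeProvable Γ (F :: Δ) := by
  cases F with
  | atom a => exact absurd rfl (hF a)
  | neg P =>
    refine .negR (ih _ _ (by simp [listSize, Formula.size]) fun v => ?_)
    have := hv v
    simp [Formula.eval, or_imp, forall_and] at *
    grind
  | and P Q =>
    refine .andR (ih _ _ (by simp [listSize, Formula.size]; omega) fun v => ?_)
      (ih _ _ (by simp [listSize, Formula.size]; omega) fun v => ?_) <;>
    · have := hv v
      simp [Formula.eval] at *
      grind
  | or P Q =>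
    refine .orR (ih _ _ (by simp [listSize, Formula.size]; omega) fun v => ?_)
    have := hv v
    simp [Formula.eval] at *
    grind
  | imp P Q =>
    refine .impR (ih _ _ (by simp [listSize, Formula.size]; omega) fun v => ?_)
    have := hv v
    simp [Formula.eval, or_imp, forall_and] at *
    grind

theorem listSize_of_mem {Γ : List Formula} {F : Formula} (h : F ∈ Γ) :
    listSize Γ = listSize (Γ.erase F) + F.size := by
  have := ((List.perm_cons_erase h).map Formula.size).sum_eq
  simp only [List.map_cons, List.sum_cons] at this
  unfold listSize
  omega

/-- Completeness of the cut-free calculus. -/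
theorem cutFreeProvable_of_valid (n : ℕ) : ∀ Γ Δ : List Formula,
    listSize Γ + listSize Δ = n → Valid Γ Δ → CutFreeProvable Γ Δ := by
  induction n using Nat.strong_induction_on with
  | _ n ih =>
  intro Γ Δ hn hv
  by_cases hL : ∃ F ∈ Γ, ∀ a, F ≠ .atom a
  · obtain ⟨F, hF, hna⟩ := hL
    have hperm : Γ.Perm (Γ.erase F ++ [F]) :=
      (List.perm_cons_erase hF).trans (List.perm_append_singleton _ _).symm
    have hs := listSize_of_mem hF
    refine .permL hperm.symm (reduceL hna (fun Γ' Δ' hlt => ih _ (by omega) Γ' Δ' rfl) ?_)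
    exact fun v h => hv v fun P hP => h P (hperm.mem_iff.1 hP)
  by_cases hR : ∃ F ∈ Δ, ∀ a, F ≠ .atom a
  · obtain ⟨F, hF, hna⟩ := hR
    have hperm := List.perm_cons_erase hF
    have hs := listSize_of_mem hF
    refine .permR hperm.symm (reduceR hna (fun Γ' Δ' hlt => ih _ (by omega) Γ' Δ' rfl) ?_)
    intro v h
    obtain ⟨Q, hQ, hQv⟩ := hv v h
    exact ⟨Q, hperm.mem_iff.1 hQ, hQv⟩
  push Not at hL hR
  -- The valuation making exactly the atoms of `Γ` true yields an atom of `Δ` that is also in `Γ`.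
  obtain ⟨Q, hQ, hQv⟩ := hv (fun a => Formula.atom a ∈ Γ) (by
    intro P hP
    obtain ⟨a, rfl⟩ := hL P hP
    exact hP)
  obtain ⟨a, rfl⟩ := hR Q hQ
  exact (CutFreeProvable.ax (.atom a)).mono (by simpa [Formula.eval] using hQv) (by simpa using hQ)

/-- Gentzen's Hauptsatz for LKp.
The cut rule is admissible in LKp: every sequent provable in LKp has a proof
in LKp containing no instance of the cut rule. -/
theorem hauptsatz (S : Sequent) (Φ : Deriv S) (hΦ : Φ.isProof) :
    ∃ Ψ : Deriv S, Ψ.isProof ∧ Ψ.cutFree :=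
  cutFreeProvable_of_valid _ S.1 S.2 rfl (Φ.valid hΦ)

end LKp
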